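/- Let m ≥ 3 and let A ≥ 0, B be integers with 14A + 7B - B² ≥ 0 and (A,B) ≢ (0,0) mod 7. Then there exist integers x₁, x₂, x₃, x₄ with P_m(x₁) + P_m(x₂) + 2P_m(x₃) + 3P_m(x₄) = A(m-2) + B. -/

import Mathlib

/-- The generalized `m`-gonal number `P_m(x) = ((m-2)x² - (m-4)x)/2`. -/
def polygonal (m x : ℤ) : ℤ := ((m - 2) * x ^ 2 - (m - 4) * x) / 2

/-- A ternary integral quadratic form. -/
def tf (a b c r s t x y z : ℤ) : ℤ :=
  a * x ^ 2 + b * y ^ 2 + c * z ^ 2 + r * y * z + s * x * z + t * x * y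

/-- Positive forms of half-discriminant 21 in the genus of interest representing `K`. -/
def Good (K a b c r s t : ℤ) : Prop :=
  0 < a ∧ 0 < 4 * a * b - t ^ 2 ∧
  4 * a * b * c + r * s * t - a * r ^ 2 - b * s ^ 2 - c * t ^ 2 = 21 ∧
  (∃ x y z, tf a b c r s t x y z = K) ∧
  (∀ x y z k, tf a b c r s t x y z = 7 * k → k % 7 = 0 ∨ k % 7 = 3 ∨ k % 7 = 5 ∨ k % 7 = 6) ∧
  (∃ x y z k, tf a b c r s t x y z = 9 * k + 6)

/-- shift `x ↦ x + k y + l z` -/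
theorem good_shiftx {K a b c r s t : ℤ} (k l : ℤ) (h : Good K a b c r s t) :
    Good K a (a * k ^ 2 + t * k + b) (a * l ^ 2 + s * l + c)
      (r + 2 * a * k * l + s * k + t * l) (s + 2 * a * l) (t + 2 * a * k) := by
  obtain ⟨h1, h2, h3, ⟨x, y, z, h4⟩, h5, ⟨x', y', z', k', h6⟩⟩ := h
  refine ⟨h1, ?_, ?_, ⟨x - k * y - l * z, y, z, ?_⟩, ?_, ⟨x' - k * y' - l * z', y', z', k', ?_⟩⟩
  · linarith
  · linarith
  · rw [← h4]; unfold tf; ring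
  · intro x y z j hj
    apply h5 (x + k * y + l * z) y z j
    rw [← hj]; unfold tf; ring
  · rw [← h6]; unfold tf; ring

/-- shift `y ↦ y + k z` -/
theorem good_shifty {K a b c r s t : ℤ} (k : ℤ) (h : Good K a b c r s t) :
    Good K a b (b * k ^ 2 + r * k + c) (r + 2 * b * k) (s + t * k) t := by
  obtain ⟨h1, h2, h3, ⟨x, y, z, h4⟩, h5, ⟨x', y', z', k', h6⟩⟩ := h
  refine ⟨h1, h2, ?_, ⟨x, y - k * z, z, ?_⟩, ?_, ⟨x', y' - k * z', z', k', ?_⟩⟩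
  · linarith
  · rw [← h4]; unfold tf; ring
  · intro x y z j hj
    apply h5 x (y + k * z) z j
    rw [← hj]; unfold tf; ring
  · rw [← h6]; unfold tf; ring

theorem good_swapxy {K a b c r s t : ℤ} (h : Good K a b c r s t) :
    Good K b a c s r t := by
  obtain ⟨h1, h2, h3, ⟨x, y, z, h4⟩, h5, ⟨x', y', z', k', h6⟩⟩ := h
  refine ⟨?_, ?_, ?_, ⟨y, x, z, ?_⟩, ?_, ⟨y', x', z', k', ?_⟩⟩
  · by_contra hb
    push Not at hb
    nlinarith [sq_nonneg t, mul_nonneg h1.le (neg_nonneg.2 hb)]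
  · linarith
  · linarith
  · rw [← h4]; unfold tf; ring
  · intro x y z j hj
    apply h5 y x z j
    rw [← hj]; unfold tf; ring
  · rw [← h6]; unfold tf; ring

theorem good_w {K a b c r s t : ℤ} (h : Good K a b c r s t) :
    (4 * a * b - t ^ 2) * (4 * a * c - s ^ 2) = 84 * a + (2 * a * r - s * t) ^ 2 := by
  obtain ⟨h1, h2, h3, -⟩ := h
  linear_combination 4 * a * h3

theorem good_swapyz {K a b c r s t : ℤ} (h : Good K a b c r s t) :
    Good K a c b r t s := by
  have hw := good_w h
  obtain ⟨h1, h2, h3, ⟨x, y, z, h4⟩, h5, ⟨x', y', z', k', h6⟩⟩ := h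
  refine ⟨h1, ?_, ?_, ⟨x, z, y, ?_⟩, ?_, ⟨x', z', y', k', ?_⟩⟩
  · have : 0 < (4 * a * b - t ^ 2) * (4 * a * c - s ^ 2) := by
      rw [hw]; positivity
    exact (pos_iff_pos_of_mul_pos this).1 h2
  · linarith
  · rw [← h4]; unfold tf; ring
  · intro x y z j hj
    apply h5 x z y j
    rw [← hj]; unfold tf; ring
  · rw [← h6]; unfold tf; ring

theorem exists_shift (n m : ℤ) (hm : 0 < m) : ∃ k : ℤ, |n + 2 * m * k| ≤ m := by
  refine ⟨-((n + m) / (2 * m)), ?_⟩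
  have h1 := Int.emod_add_mul_ediv (n + m) (2 * m)
  have h2 := Int.emod_nonneg (n + m) (show 2 * m ≠ 0 by omega)
  have h3 := Int.emod_lt_of_pos (n + m) (show 0 < 2 * m by omega)
  rw [abs_le]
  constructor <;> linarith

theorem reduce {K a b c r s t : ℤ} (h : Good K a b c r s t) :
    ∃ a b c r s t, Good K a b c r s t ∧ a ≤ b ∧ |t| ≤ a ∧ |s| ≤ a ∧
      |2 * (2 * a * r - s * t)| ≤ 4 * a * b - t ^ 2 ∧
      4 * a * b - t ^ 2 ≤ 4 * a * c - s ^ 2 := by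
  classical
  have hex : ∃ n : ℕ, ∃ a b c r s t, Good K a b c r s t ∧ a = n :=
    ⟨a.toNat, a, b, c, r, s, t, h, by have := h.1; omega⟩
  obtain ⟨a0, b0, c0, r0, s0, t0, h0, ha0⟩ := Nat.find_spec hex
  have hmin : ∀ a b c r s t, Good K a b c r s t → a0 ≤ a := by
    intro a b c r s t h
    have := Nat.find_min' hex ⟨a, b, c, r, s, t, h, (Int.toNat_of_nonneg h.1.le).symm⟩
    have := h.1
    omega
  have hex2 : ∃ n : ℕ, ∃ b c r s t, Good K a0 b c r s t ∧ 4 * a0 * b - t ^ 2 = n :=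
    ⟨(4 * a0 * b0 - t0 ^ 2).toNat, b0, c0, r0, s0, t0, h0,
      (Int.toNat_of_nonneg h0.2.1.le).symm⟩
  obtain ⟨b1, c1, r1, s1, t1, h1, hn1⟩ := Nat.find_spec hex2
  have hmin2 : ∀ b c r s t, Good K a0 b c r s t → 4 * a0 * b1 - t1 ^ 2 ≤ 4 * a0 * b - t ^ 2 := by
    intro b c r s t h
    have := Nat.find_min' hex2 ⟨b, c, r, s, t, h, (Int.toNat_of_nonneg h.2.1.le).symm⟩
    have := h.2.1
    omega
  obtain ⟨k, hk⟩ := exists_shift (2 * (2 * a0 * r1 - s1 * t1)) (4 * a0 * b1 - t1 ^ 2) h1.2.1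
  have h2 := good_shifty k h1
  obtain ⟨i, hi⟩ := exists_shift t1 a0 h0.1
  obtain ⟨l, hl⟩ := exists_shift (s1 + t1 * k) a0 h0.1
  have h3 := good_shiftx i l h2
  refine ⟨_, _, _, _, _, _, h3, hmin _ _ _ _ _ _ (good_swapxy h3), hi, hl, ?_, ?_⟩
  · convert hk using 1
    · congr 1; ring
    · ring
  · have := hmin2 _ _ _ _ _ (good_swapyz h3)
    linarith

theorem good_final {K a b c r s t : ℤ} (h : Good K a b c r s t) :
    ∃ x y z : ℤ, x ^ 2 + 2 * y ^ 2 + 3 * z ^ 2 + x * z - y * z = K := by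
  obtain ⟨a, b, c, r, s, t, h, hab, ht, hs, hmu, hnw⟩ := reduce h
  have hw := good_w h
  obtain ⟨h1, h2, h3, ⟨x, y, z, h4⟩, h5, ⟨x', y', z', k', h6⟩⟩ := h
  generalize hν : 4 * a * b - t ^ 2 = ν at *
  generalize hww : 4 * a * c - s ^ 2 = w at *
  generalize hμ : 2 * a * r - s * t = μ at *
  rw [abs_le] at ht hs hmu
  have e1 : 4 * μ ^ 2 ≤ ν ^ 2 := by nlinarith
  have e2 : ν ^ 2 ≤ ν * w := by nlinarith
  have e3 : ν ^ 2 ≤ 112 * a := by linarith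
  have e4 : 3 * a ^ 2 ≤ ν := by nlinarith
  have e5 : a ≤ 2 := by
    by_contra hc
    have hc : 3 ≤ a := by omega
    have : 9 * a ^ 4 ≤ 112 * a := by nlinarith [sq_nonneg a]
    have : 9 * 27 * a ≤ 9 * a ^ 4 := by
      have : 27 ≤ a ^ 3 := by nlinarith [sq_nonneg a]
      nlinarith
    linarith
  have e6 : ν ≤ 14 := by nlinarith
  have hb : b ≤ 4 := by nlinarith
  have hmu1 : -7 ≤ μ := by omega
  have hmu2 : μ ≤ 7 := by omega
  obtain ⟨ht1, ht2⟩ := ht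
  obtain ⟨hs1, hs2⟩ := hs
  have key : a = 1 ∧ ((b = 1 ∧ c = 7 ∧ r = 0 ∧ s = 0 ∧ (t = 1 ∨ t = -1)) ∨
      (b = 2 ∧ c = 3 ∧ r = 0 ∧ s = 0 ∧ (t = 1 ∨ t = -1)) ∨
      (b = 2 ∧ c = 3 ∧ t = 0 ∧ (r = 1 ∨ r = -1) ∧ (s = 1 ∨ s = -1))) := by
    clear h4 h5 h6 e1 e2 hw e4
    have ha : a = 1 ∨ a = 2 := by omega
    rcases ha with rfl | rfl
    · have hν' : ν ≤ 10 := by nlinarith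
      interval_cases t <;> interval_cases b <;> try (exfalso; omega)
      all_goals
        interval_cases s <;>
        · have hr1 : -3 ≤ r := by omega
          have hr2 : r ≤ 3 := by omega
          interval_cases r <;> omega
    · interval_cases t <;> interval_cases b <;> try (exfalso; omega)
      all_goals
        interval_cases s <;>
        · have hr1 : -3 ≤ r := by omega
          have hr2 : r ≤ 3 := by omega
          interval_cases r <;> omega
  clear hν hww hμ hw e1 e2 e3 e4 hnw hmu
  have z1 : ∀ x y z : ZMod 9, x ^ 2 + 2 * y ^ 2 + 3 * z ^ 2 + x * y ≠ 6 := by decide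
  have z2 : ∀ x y z : ZMod 9, x ^ 2 + 2 * y ^ 2 + 3 * z ^ 2 - x * y ≠ 6 := by decide
  have z9 : (9 : ZMod 9) = 0 := rfl
  unfold tf at *
  obtain ⟨rfl, ⟨rfl, rfl, rfl, rfl, rfl | rfl⟩ | ⟨rfl, rfl, rfl, rfl, rfl | rfl⟩ |
    ⟨rfl, rfl, rfl, rfl | rfl, rfl | rfl⟩⟩ := key
  · have := h5 2 1 0 1 (by norm_num)
    omega
  · have := h5 2 (-1) 0 1 (by norm_num)
    omega
  · exfalso
    have := congrArg (Int.cast : ℤ → ZMod 9) h6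
    push_cast at this
    rw [z9] at this
    apply z1 x' y' z'
    linear_combination this
  · exfalso
    have := congrArg (Int.cast : ℤ → ZMod 9) h6
    push_cast at this
    rw [z9] at this
    apply z2 x' y' z'
    linear_combination this
  · exact ⟨x, -y, z, by linarith⟩
  · exact ⟨-x, -y, z, by linarith⟩
  · exact ⟨x, y, z, by linarith⟩
  · exact ⟨-x, y, z, by linarith⟩

theorem sq_sum_seven (e u v : ℤ) (he : e % 7 = 1 ∨ e % 7 = 2 ∨ e % 7 = 4)
    (h : (7 : ℤ) ∣ e * u ^ 2 + v ^ 2) : (7 : ℤ) ∣ u ∧ (7 : ℤ) ∣ v := by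
  have key : ∀ e u v : ZMod 7, (e = 1 ∨ e = 2 ∨ e = 4) → e * u ^ 2 + v ^ 2 = 0 → u = 0 ∧ v = 0 := by
    decide
  have h' := (ZMod.intCast_zmod_eq_zero_iff_dvd _ 7).2 h
  push_cast at h'
  have := key e u v (by
    have hh := (ZMod.intCast_mod e 7)
    rcases he with he | he | he <;> simp [he] at hh <;> simp [← hh]) h'
  exact ⟨(ZMod.intCast_zmod_eq_zero_iff_dvd _ 7).1 this.1,
    (ZMod.intCast_zmod_eq_zero_iff_dvd _ 7).1 this.2⟩

theorem good_construct (K σ ε β α τ : ℤ) (h1 : 12 * K * ε = σ ^ 2 * β + 7)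
    (h2 : α * β = τ ^ 2 + ε) (hε : 0 < ε) (hβ : 0 < β) (hβ7 : ¬ (7 : ℤ) ∣ β)
    (hε7 : ε % 7 = 1 ∨ ε % 7 = 2 ∨ ε % 7 = 4) (hβ3 : β % 3 = 2) :
    Good K (3 * α) (3 * β) K 0 σ (6 * τ) := by
  refine ⟨?_, ?_, ?_, ⟨0, 0, 1, by unfold tf; ring⟩, ?_, ⟨0, 1, 3, ?_⟩⟩
  · have : 0 < α * β := by rw [h2]; positivity
    have := (pos_iff_pos_of_mul_pos this).2 hβ
    omega
  · nlinarith
  · linear_combination 36 * K * h2 + 3 * h1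
  · intro x y z k hk
    unfold tf at hk
    have hid : 12 * ε * β * (7 * k) = ε * (6 * (β * y + τ * x)) ^ 2 + (6 * ε * x + σ * β * z) ^ 2
        + 7 * β * z ^ 2 := by
      rw [← hk]
      linear_combination 36 * ε * x ^ 2 * h2 + β * z ^ 2 * h1
    obtain ⟨⟨u, hu⟩, ⟨v, hv⟩⟩ := sq_sum_seven ε (6 * (β * y + τ * x)) (6 * ε * x + σ * β * z) hε7
      ⟨12 * ε * β * k - β * z ^ 2, by linarith⟩
    rw [hu, hv] at hid
    have h7 : (7 : ℤ) ∣ β * (12 * ε * k - z ^ 2) := ⟨ε * u ^ 2 + v ^ 2, by linarith⟩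
    have h7' := ((by norm_num : Prime (7 : ℤ)).dvd_or_dvd h7).resolve_left hβ7
    have key : ∀ e k z : ZMod 7, (e = 1 ∨ e = 2 ∨ e = 4) → 12 * e * k - z ^ 2 = 0 →
      k = 0 ∨ k = 3 ∨ k = 5 ∨ k = 6 := by decide
    have h' := (ZMod.intCast_zmod_eq_zero_iff_dvd _ 7).2 h7'
    push_cast at h'
    have := key ε k z (by
      have hh := (ZMod.intCast_mod ε 7)
      rcases hε7 with he | he | he <;> simp [he] at hh <;> simp [← hh]) h'
    have c0 : ∀ n : ℤ, (k : ZMod 7) = (n : ℤ) → k % 7 = n % 7 := fun n hn =>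
      (ZMod.intCast_eq_intCast_iff' k n 7).1 hn
    rcases this with h | h | h | h
    · left; exact c0 0 (by simpa using h)
    · right; left; exact c0 3 (by simpa using h)
    · right; right; left; exact c0 5 (by simpa using h)
    · right; right; right; exact c0 6 (by simpa using h)
  · obtain ⟨j, hj⟩ : ∃ j, β = 3 * j + 2 := ⟨β / 3, by omega⟩
    exact ⟨K + j, by unfold tf; rw [hj]; ring⟩

/-- `-ε` is a square modulo the prime `β`. -/
theorem exists_sqrt (ε β : ℕ) (hβ : β.Prime) (hβ4 : β % 4 = 1) (hε4 : ε % 4 = 1)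
    (hε7 : ε % 7 = 1 ∨ ε % 7 = 2 ∨ ε % 7 = 4) (κ σ : ℤ) (hσ : σ = 1 ∨ σ = 7)
    (h : κ * ε = σ ^ 2 * β + 7) (hβ7 : β ≠ 7) :
    ∃ α τ : ℤ, α * β = τ ^ 2 + ε := by
  haveI : Fact β.Prime := ⟨hβ⟩
  have hεodd : Odd ε := Nat.odd_iff.2 (by omega)
  have j1 : jacobiSym (-ε) β = jacobiSym ε β := by
    rw [jacobiSym.neg _ (Nat.odd_iff.2 (by omega)), ZMod.χ₄_nat_one_mod_four hβ4, one_mul]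
  have j2 : jacobiSym ε β = jacobiSym β ε :=
    jacobiSym.quadratic_reciprocity_one_mod_four hε4 (Nat.odd_iff.2 (by omega))
  have j7 : jacobiSym 7 ε = 1 := by
    have := jacobiSym.quadratic_reciprocity_one_mod_four' (a := 7) (b := ε) (by decide) hε4
    push_cast at this
    rw [this, jacobiSym.mod_left]
    rcases hε7 with h | h | h
    · rw [show ((ε : ℤ) % ((7 : ℕ) : ℤ)) = 1 by omega]; norm_num
    · rw [show ((ε : ℤ) % ((7 : ℕ) : ℤ)) = 2 by omega]; norm_num
    · rw [show ((ε : ℤ) % ((7 : ℕ) : ℤ)) = 4 by omega]; norm_num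
  have jσ : jacobiSym (σ ^ 2) ε = 1 := by
    rw [jacobiSym.pow_left]
    rcases hσ with rfl | rfl
    · simp
    · rw [j7]; simp
  have j3 : jacobiSym β ε = 1 := by
    have e1 : jacobiSym (σ ^ 2 * β) ε = jacobiSym (-7) ε := by
      rw [jacobiSym.mod_left, jacobiSym.mod_left (-7)]
      congr 1
      apply Int.emod_emod_of_dvd _ (dvd_refl _) |>.symm.trans ?_
      rw [show σ ^ 2 * (β : ℤ) = -7 + κ * ε by linarith]
      simp
    rw [jacobiSym.mul_left, jσ, one_mul] at e1
    rw [e1, jacobiSym.neg _ hεodd, ZMod.χ₄_nat_one_mod_four hε4, one_mul, j7]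
  have j4 : legendreSym β (-ε) = 1 := by
    rw [jacobiSym.legendreSym.to_jacobiSym, j1, j2, j3]
  have hne : ((-ε : ℤ) : ZMod β) ≠ 0 := by
    intro h0
    rw [(legendreSym.eq_zero_iff β (-ε)).2 h0] at j4
    norm_num at j4
  obtain ⟨w, hw⟩ := (legendreSym.eq_one_iff β hne).1 j4
  obtain ⟨τ, rfl⟩ := ZMod.intCast_surjective w
  have : ((τ ^ 2 + ε : ℤ) : ZMod β) = 0 := by
    push_cast at hw ⊢
    linear_combination -hw
  obtain ⟨α, hα⟩ := (ZMod.intCast_zmod_eq_zero_iff_dvd _ β).1 this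
  exact ⟨α, τ, by linarith⟩

theorem rep_case1 (K : ℕ) (hK : 0 < K) (h7 : ¬ 7 ∣ K) :
    ∃ x y z : ℤ, x ^ 2 + 2 * y ^ 2 + 3 * z ^ 2 + x * z - y * z = K := by
  have hcop : (12 * K - 7).Coprime (336 * K) := by
    have h2 : (12 * K - 7).Coprime 7 := by
      rw [Nat.coprime_comm, Nat.Prime.coprime_iff_not_dvd (by norm_num)]; omega
    have h1 : (12 * K - 7).Coprime (12 * K) := by
      have h1' : (12 * K - 7).Coprime (12 * K - 7 + 7) := Nat.coprime_self_add_right.2 h2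
      rwa [Nat.sub_add_cancel (by omega)] at h1'
    have h3 : (12 * K - 7).Coprime 4 :=
      Nat.Coprime.coprime_dvd_right ⟨3 * K, by ring⟩ h1
    have := (h1.mul_right h2).mul_right h3
    rwa [show 12 * K * 7 * 4 = 336 * K by ring] at this
  haveI : NeZero (336 * K) := ⟨by omega⟩
  obtain ⟨β, hgt, hp, hmod⟩ := Nat.forall_exists_prime_gt_and_modEq (12 * K) (by omega) hcop
  obtain ⟨j, hj⟩ : ∃ j : ℕ, β = 12 * K - 7 + 336 * K * j := by
    have := (Nat.modEq_iff_dvd' (by omega)).1 hmod.symm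
    obtain ⟨j, hj⟩ := this
    exact ⟨j, by omega⟩
  have hj' : (β : ℤ) + 7 = 12 * K * (28 * j + 1) := by
    have : β + 7 = 12 * K + 336 * K * j := by omega
    zify at this
    linarith
  have hb4 : β % 4 = 1 := by
    have : β + 7 = 4 * (3 * K + 84 * (K * j)) := by
      zify; rw [hj']; ring
    omega
  have hb3 : β % 3 = 2 := by
    have : β + 7 = 3 * (4 * K + 112 * (K * j)) := by
      zify; rw [hj']; ring
    omega
  have hb7 : β ≠ 7 := by omega
  obtain ⟨α, τ, hατ⟩ := exists_sqrt (28 * j + 1) β hp hb4 (by omega) (by omega) (12 * K) 1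
    (Or.inl rfl) (by push_cast; linarith) hb7
  refine good_final (good_construct K 1 (28 * j + 1) β α τ (by linarith) (by push_cast at hατ; linarith)
    (by positivity) (by exact_mod_cast hp.pos) ?_ (by omega) (by omega))
  intro hd
  have : 7 ∣ β := by exact_mod_cast hd
  exact hb7 ((Nat.prime_dvd_prime_iff_eq (by norm_num) hp).1 this).symm

theorem rep_case2 (M : ℕ) (h7 : M % 7 = 3 ∨ M % 7 = 5 ∨ M % 7 = 6) :
    ∃ x y z : ℤ, x ^ 2 + 2 * y ^ 2 + 3 * z ^ 2 + x * z - y * z = 7 * M := by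
  have hM : 0 < M := by omega
  obtain ⟨e, he4, he7, heM⟩ : ∃ e : ℕ, e % 4 = 1 ∧ (e % 7 = 1 ∨ e % 7 = 2 ∨ e % 7 = 4) ∧
      (12 * M * e) % 7 = 1 := by
    rcases h7 with h | h | h
    · exact ⟨1, by norm_num, by norm_num, by omega⟩
    · exact ⟨9, by norm_num, by norm_num, by omega⟩
    · exact ⟨25, by norm_num, by norm_num, by omega⟩
  obtain ⟨b, hb⟩ : ∃ b, 12 * M * e = 7 * b + 1 := ⟨12 * M * e / 7, by omega⟩
  have hcop : b.Coprime (48 * M) := by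
    have h1 : b.Coprime (12 * M) := by
      apply Nat.Coprime.symm
      have : Nat.Coprime (12 * M) (7 * b) := by
        have hh : Nat.Coprime (7 * b + 1) (7 * b) := by simp
        rw [← hb] at hh
        exact Nat.Coprime.coprime_dvd_left ⟨e, rfl⟩ hh
      exact Nat.Coprime.coprime_dvd_right ⟨7, by ring⟩ this
    have h3 : b.Coprime 4 :=
      Nat.Coprime.coprime_dvd_right ⟨3 * M, by ring⟩ h1
    have := h1.mul_right h3
    rwa [show 12 * M * 4 = 48 * M by ring] at this
  haveI : NeZero (48 * M) := ⟨by omega⟩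
  obtain ⟨β, hgt, hp, hmod⟩ := Nat.forall_exists_prime_gt_and_modEq (b + 7) (by omega) hcop
  obtain ⟨j, hj⟩ : ∃ j : ℕ, β = b + 48 * M * j := by
    have := (Nat.modEq_iff_dvd' (by omega)).1 hmod.symm
    obtain ⟨j, hj⟩ := this
    exact ⟨j, by omega⟩
  have hj' : 7 * (β : ℤ) + 1 = 12 * M * (e + 28 * j) := by
    zify at hj hb
    rw [hj]
    linear_combination -hb
  have hb4 : β % 4 = 1 := by
    have : 7 * β + 1 = 4 * (3 * M * (e + 28 * j)) := by
      zify; rw [hj']; ring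
    omega
  have hb3 : β % 3 = 2 := by
    have : 7 * β + 1 = 3 * (4 * M * (e + 28 * j)) := by
      zify; rw [hj']; ring
    omega
  have hb7 : β ≠ 7 := by omega
  obtain ⟨α, τ, hατ⟩ := exists_sqrt (e + 28 * j) β hp hb4 (by omega) (by omega) (84 * M) 7
    (Or.inr rfl) (by push_cast; linarith) hb7
  refine good_final (good_construct (7 * M) 7 (e + 28 * j) β α τ (by linarith)
    (by push_cast at hατ; linarith) (by omega) (by exact_mod_cast hp.pos) ?_ (by omega) (by omega))
  intro hd
  have : 7 ∣ β := by exact_mod_cast hd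
  exact hb7 ((Nat.prime_dvd_prime_iff_eq (by norm_num) hp).1 this).symm

theorem two_polygonal (m x : ℤ) : 2 * polygonal m x = (m - 2) * x ^ 2 - (m - 4) * x := by
  unfold polygonal
  apply Int.mul_ediv_cancel'
  obtain ⟨k, hk⟩ := Int.even_mul_succ_self (x - 1)
  exact ⟨(m - 2) * k + x, by linear_combination (m - 2) * hk⟩

theorem finish (m A B x₁ x₂ x₃ x₄ : ℤ) (h1 : x₁ + x₂ + 2 * x₃ + 3 * x₄ = B)
    (h2 : x₁ ^ 2 + x₂ ^ 2 + 2 * x₃ ^ 2 + 3 * x₄ ^ 2 = 2 * A + B) :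
    polygonal m x₁ + polygonal m x₂ + 2 * polygonal m x₃ + 3 * polygonal m x₄ =
        A * (m - 2) + B := by
  have e1 := two_polygonal m x₁
  have e2 := two_polygonal m x₂
  have e3 := two_polygonal m x₃
  have e4 := two_polygonal m x₄
  have : 2 * (polygonal m x₁ + polygonal m x₂ + 2 * polygonal m x₃ + 3 * polygonal m x₄) =
        2 * (A * (m - 2) + B) := by
    linear_combination e1 + e2 + 2 * e3 + 3 * e4 + (m - 2) * h2 - (m - 4) * h1
  linarith

theorem rep_1123 (m : ℤ) (hm : 3 ≤ m) (A B : ℤ) (hA : 0 ≤ A)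
    (hd : 0 ≤ 14 * A + 7 * B - B ^ 2)
    (hmod : ¬ (A % 7 = 0 ∧ B % 7 = 0)) :
    ∃ x₁ x₂ x₃ x₄ : ℤ,
      polygonal m x₁ + polygonal m x₂ + 2 * polygonal m x₃ + 3 * polygonal m x₄ =
        A * (m - 2) + B := by
  by_cases hB : B % 7 = 0
  · obtain ⟨b, rfl⟩ : ∃ b, B = 7 * b := ⟨B / 7, by omega⟩
    obtain ⟨k, hk⟩ := Int.even_mul_succ_self (b - 1)
    have hK : 0 ≤ A - 7 * k := by nlinarith
    obtain ⟨n, hn⟩ := Int.eq_ofNat_of_zero_le hK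
    obtain ⟨x, y, z, h⟩ := rep_case1 n (by omega) (by omega)
    rw [← hn] at h
    refine ⟨b - z + (2 * z + y + x), b - z + (z + y - x), b - z + (2 * z - y), b - z, ?_⟩
    apply finish
    · ring
    · linear_combination 2 * h + 7 * hk
  · obtain ⟨k, hk⟩ := Int.even_mul_succ_self (B - 1)
    have hM : 0 ≤ 7 * A + 3 * B - k := by nlinarith
    obtain ⟨n, hn⟩ := Int.eq_ofNat_of_zero_le hM
    have hk2 : 2 * k = B ^ 2 - B := by linarith
    have hn7 : n % 7 = 3 ∨ n % 7 = 5 ∨ n % 7 = 6 := by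
      obtain ⟨q, i, hq, hi⟩ : ∃ q i : ℤ, B = 7 * q + i ∧ (i = 1 ∨ i = 2 ∨ i = 3 ∨ i = 4 ∨ i = 5 ∨ i = 6) :=
        ⟨B / 7, B % 7, by omega, by omega⟩
      have : 2 * k = 7 * (7 * q ^ 2 + 2 * q * i - q) + (i ^ 2 - i) := by rw [hk2, hq]; ring
      generalize 7 * q ^ 2 + 2 * q * i - q = g at this
      rcases hi with rfl | rfl | rfl | rfl | rfl | rfl <;> norm_num at this <;> omega
    obtain ⟨x, y, z, h⟩ := rep_case2 n hn7
    rw [← hn] at h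
    -- `8 * 7M = 2p² + T² + 21z²`
    obtain ⟨⟨p, hp⟩, ⟨T, hT⟩⟩ := sq_sum_seven 2 (2 * x + z) (4 * y - z) (by norm_num)
      ⟨8 * (7 * A + 3 * B - k) - 3 * z ^ 2, by linarith⟩
    have key : ∃ x y z p T : ℤ, x ^ 2 + 2 * y ^ 2 + 3 * z ^ 2 + x * z - y * z =
        7 * (7 * A + 3 * B - k) ∧ 2 * x + z = 7 * p ∧ 4 * y - z = 7 * T ∧ (7 : ℤ) ∣ B - z := by
      have h8 : 8 * (7 * A + 3 * B - k) = 14 * p ^ 2 + 7 * T ^ 2 + 3 * z ^ 2 := by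
        have : 7 * (8 * (7 * A + 3 * B - k)) = 2 * (2 * x + z) ^ 2 + (4 * y - z) ^ 2 + 21 * z ^ 2 := by
          linarith
        rw [hp, hT] at this
        linarith
      have hdz : (7 : ℤ) ∣ (B - z) * (B + z) :=
        ⟨2 * (8 * A + 4 * B - 2 * p ^ 2 - T ^ 2 - z ^ 2) - (B ^ 2 - z ^ 2), by
          linear_combination -2 * h8 - 8 * hk2⟩
      rcases (by norm_num : Prime (7 : ℤ)).dvd_or_dvd hdz with h' | h'
      · exact ⟨x, y, z, p, T, h, hp, hT, h'⟩
      · exact ⟨-x, -y, -z, -p, -T, by linarith, by linarith, by linarith, by simpa using h'⟩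
    clear h hp hT p T x y z
    obtain ⟨x, y, z, p, T, h, hp, hT, ⟨f, hf⟩⟩ := key
    obtain ⟨g, hg⟩ : ∃ g, p + T = 2 * g := ⟨(p + T) / 2, by omega⟩
    refine ⟨f + (y - 2 * T + g), f + (y - T - g), f + (y - 2 * T), f, ?_⟩
    apply finish
    · linarith
    · obtain rfl : z = 4 * y - 7 * T := by linarith
      obtain rfl : p = 2 * g - T := by linarith
      obtain rfl : x = 7 * g - 2 * y := by linarith
      obtain rfl : B = 7 * f + 4 * y - 7 * T := by linarith
      have : 49 * ((f + (y - 2 * T + g)) ^ 2 + (f + (y - T - g)) ^ 2 + 2 * (f + (y - 2 * T)) ^ 2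
          + 3 * f ^ 2) = 49 * (2 * A + (7 * f + 4 * y - 7 * T)) := by
        linear_combination 2 * h - 7 * hk2
      linarith
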